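/- Let p₀ = (1 − log π / log 4)^{-1}, let p > p₀ be a real number, and let C > 0. Then there exist positive integers d and m such that C · 2^{m/p} · (∫_{𝕋^d} |z₁ + z₂ + ⋯ + z_d|/√d dμ(z))^m < 1, where μ is the normalized Haar measure on 𝕋^d. (This amplification step, combined with the multiplicativity of Schatten norms, inner products and L¹ norms over independent blocks of variables, produces for each C > 0 a polynomial Hankel symbol Φ and a polynomial F with |⟨F, Φ⟩| > C · ‖H_Φ‖_{S_p} ‖F‖₁, contradicting the existence of a uniform symbol-lifting constant.) -/

import Mathlib

open MeasureTheory

noncomputable instance : MeasurableSpace Circle := borel Circle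
instance : BorelSpace Circle := ⟨rfl⟩

/-- The normalized Lebesgue (arc-length) measure on the unit circle `{z : ℂ | |z| = 1}`,
a probability measure; it is the normalized Haar measure of the circle group. -/
noncomputable def circleHaar : Measure Circle :=
  (ENNReal.ofReal (2 * Real.pi))⁻¹ •
    (volume.restrict (Set.Ioc 0 (2 * Real.pi))).map Circle.exp

/-- The normalized Haar measure on the `d`-dimensional torus `𝕋^d`, i.e. the product of the
normalized Lebesgue (arc-length) measures on each circle factor. -/
noncomputable def torusHaar (d : ℕ) : Measure (Fin d → Circle) :=
  Measure.pi fun _ => circleHaar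

/-!
By rotation invariance of `torusHaar d`, averaging `|re (c * z)|` over `c` in the circle gives
`E |z₁ + ⋯ + z_d| = (π / 2) E |re z₁ + ⋯ + re z_d|`. The real parts are i.i.d., centered and of
variance `1 / 2`, so by the central limit theorem, together with convergence of first absolute
moments (the second moments are bounded), `E |z₁ + ⋯ + z_d| / √d` tends to
`(π / 2) √(1 / π) = √π / 2`. The condition `p > p₀` means that `2 ^ (1 / p) * (√π / 2) < 1`,
so for large `d` the `m`-th powers decay to `0`.
-/

open ProbabilityTheory Filter Topology
open scoped Real NNReal

section FirstAbsoluteMoments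

lemma sub_min_le_sq_div (x : ℝ) {M : ℝ} (hM : 0 < M) : x - min x M ≤ x ^ 2 / M := by
  rw [le_div_iff₀ hM]
  rcases le_total x M with h | h
  · rw [min_eq_left h, sub_self, zero_mul]
    positivity
  · rw [min_eq_right h]
    nlinarith [sq_nonneg M]

lemma abs_integral_norm_sub_integral_min_norm_le {Ω E : Type*} {mΩ : MeasurableSpace Ω}
    {μ : Measure Ω} [IsFiniteMeasure μ] [NormedAddCommGroup E] {X : Ω → E} (hX : MemLp X 2 μ)
    {M : ℝ} (hM : 0 < M) :
    |∫ ω, ‖X ω‖ ∂μ - ∫ ω, min ‖X ω‖ M ∂μ| ≤ (∫ ω, ‖X ω‖ ^ 2 ∂μ) / M := by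
  have hnorm : Integrable (fun ω => ‖X ω‖) μ := (hX.integrable one_le_two).norm
  have hmin : Integrable (fun ω => min ‖X ω‖ M) μ := hnorm.inf (integrable_const M)
  rw [← integral_sub hnorm hmin, ← integral_div,
    abs_of_nonneg (integral_nonneg fun ω => sub_nonneg.2 (min_le_left _ _))]
  exact integral_mono (hnorm.sub hmin) (hX.integrable_norm_pow two_ne_zero |>.div_const M)
    fun ω => sub_min_le_sq_div ‖X ω‖ hM

section ConvergenceInDistribution

variable {ι E Ω' : Type*} {Ω : ι → Type*} {m : ∀ i, MeasurableSpace (Ω i)}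
  {m' : MeasurableSpace Ω'} [NormedAddCommGroup E] [MeasurableSpace E] [OpensMeasurableSpace E]
  {X : ∀ i, Ω i → E} {l : Filter ι} {Z : Ω' → E} {μ : ∀ i, Measure (Ω i)}
  [∀ i, IsProbabilityMeasure (μ i)] {μ' : Measure Ω'} [IsProbabilityMeasure μ']

lemma tendsto_integral_comp_of_tendstoInDistribution (h : TendstoInDistribution X l Z μ μ')
    (g : BoundedContinuousFunction E ℝ) :
    Tendsto (fun i => ∫ ω, g (X i ω) ∂μ i) l (𝓝 (∫ ω, g (Z ω) ∂μ')) := by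
  have hlim := ProbabilityMeasure.tendsto_iff_forall_integral_tendsto.1 h.tendsto g
  simpa only [ProbabilityMeasure.coe_mk, integral_map (h.forall_aemeasurable _)
    g.continuous.aestronglyMeasurable, integral_map h.aemeasurable_limit
    g.continuous.aestronglyMeasurable] using hlim

lemma tendsto_integral_min_norm_of_tendstoInDistribution (h : TendstoInDistribution X l Z μ μ')
    {M : ℝ} (hM : 0 ≤ M) :
    Tendsto (fun i => ∫ ω, min ‖X i ω‖ M ∂μ i) l (𝓝 (∫ ω, min ‖Z ω‖ M ∂μ')) :=
  tendsto_integral_comp_of_tendstoInDistribution h <|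
    .ofNormedAddCommGroup (fun x => min ‖x‖ M) (by fun_prop) M fun x => by
      rw [Real.norm_of_nonneg (le_min (norm_nonneg x) hM)]
      exact min_le_right _ _

theorem tendsto_integral_norm_of_tendstoInDistribution (h : TendstoInDistribution X l Z μ μ')
    (hX : ∀ i, MemLp (X i) 2 (μ i)) (hZ : MemLp Z 2 μ') {K : ℝ}
    (hK : ∀ i, ∫ ω, ‖X i ω‖ ^ 2 ∂μ i ≤ K) :
    Tendsto (fun i => ∫ ω, ‖X i ω‖ ∂μ i) l (𝓝 (∫ ω, ‖Z ω‖ ∂μ')) := by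
  rw [Metric.tendsto_nhds]
  intro ε hε
  obtain ⟨M, hMε, hM⟩ : ∃ M : ℝ, (K + ∫ ω, ‖Z ω‖ ^ 2 ∂μ') / M < ε / 2 ∧ 0 < M :=
    (((tendsto_const_nhds.div_atTop tendsto_id).eventually_lt_const (half_pos hε)).and
      (eventually_gt_atTop 0)).exists
  filter_upwards [Metric.tendsto_nhds.1
    (tendsto_integral_min_norm_of_tendstoInDistribution h hM.le) (ε / 2) (half_pos hε)] with i hmin
  have hXi : |∫ ω, ‖X i ω‖ ∂μ i - ∫ ω, min ‖X i ω‖ M ∂μ i| ≤ K / M :=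
    (abs_integral_norm_sub_integral_min_norm_le (hX i) hM).trans (by gcongr; exact hK i)
  have hZM := abs_integral_norm_sub_integral_min_norm_le hZ hM
  rw [add_div] at hMε
  rw [Real.dist_eq, abs_lt] at hmin ⊢
  rw [abs_le] at hXi hZM
  constructor <;> linarith

end ConvergenceInDistribution

lemma integral_Ioi_mul_exp_neg_mul_sq {b : ℝ} (hb : 0 < b) :
    ∫ x in Set.Ioi (0 : ℝ), x * Real.exp (-b * x ^ 2) = (2 * b)⁻¹ := by
  have hmoment := integral_rpow_mul_exp_neg_mul_rpow (q := 1) two_pos (by norm_num) hb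
  simp only [Real.rpow_one, Real.rpow_two] at hmoment
  rw [hmoment, show ((1 : ℝ) + 1) / 2 = 1 by norm_num, Real.Gamma_one,
    show (-(1 + 1) / 2 : ℝ) = -1 by norm_num, Real.rpow_neg_one]
  ring

lemma integral_abs_gaussianReal (v : ℝ≥0) :
    ∫ x, |x| ∂gaussianReal 0 v = √(2 * v / π) := by
  rcases eq_or_ne v 0 with rfl | hv
  · simp
  have hdensity (x : ℝ) : gaussianPDFReal 0 v x • |x| =
      (√(2 * π * v))⁻¹ * (|x| * Real.exp (-(2 * (v : ℝ))⁻¹ * |x| ^ 2)) := by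
    rw [gaussianPDFReal_def, sq_abs, smul_eq_mul]
    ring_nf
  have hscale : 2 * (v : ℝ) = √(2 * v / π) * √(2 * π * v) := by
    rw [← Real.sqrt_mul (by positivity), Eq.comm,
      Real.sqrt_eq_iff_mul_self_eq (by positivity) (by positivity)]
    field_simp
  simp only [integral_gaussianReal_eq_integral_smul hv, hdensity, integral_const_mul]
  rw [integral_comp_abs (f := fun x => x * Real.exp (-(2 * (v : ℝ))⁻¹ * x ^ 2)),
    integral_Ioi_mul_exp_neg_mul_sq (by positivity)]
  have hsqrt : √(2 * π * v) ≠ 0 := by positivity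
  field_simp
  linarith

section CentralLimitTheorem

variable {Ω : Type*} {mΩ : MeasurableSpace Ω} {P : Measure Ω} [IsProbabilityMeasure P]
  {X : ℕ → Ω → ℝ}

lemma memLp_inv_sqrt_mul_sum_sub (hX : MemLp (X 0) 2 P)
    (hident : ∀ i, IdentDistrib (X i) (X 0) P P) (n : ℕ) :
    MemLp (fun ω => (√n)⁻¹ * (∑ k ∈ Finset.range n, X k ω - n * P[X 0])) 2 P :=
  ((memLp_finsetSum (Finset.range n) fun k _ => (hident k).memLp_iff.2 hX).sub
    (memLp_const _)).const_mul _

lemma integral_sq_inv_sqrt_mul_sum_sub_le (hX : MemLp (X 0) 2 P) (hindep : iIndepFun X P)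
    (hident : ∀ i, IdentDistrib (X i) (X 0) P P) (n : ℕ) :
    ∫ ω, ((√n)⁻¹ * (∑ k ∈ Finset.range n, X k ω - n * P[X 0])) ^ 2 ∂P ≤ Var[X 0; P] := by
  have hLp (k : ℕ) : MemLp (X k) 2 P := (hident k).memLp_iff.2 hX
  have hmean : ∫ ω, (∑ k ∈ Finset.range n, X k) ω ∂P = n * P[X 0] := by
    simp only [Finset.sum_apply]
    rw [integral_finsetSum _ fun k _ => (hLp k).integrable one_le_two]
    simp only [(hident _).integral_eq, Finset.sum_const, Finset.card_range, nsmul_eq_mul]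
  have hvar : Var[∑ k ∈ Finset.range n, X k; P] = n * Var[X 0; P] := by
    rw [IndepFun.variance_sum (fun k _ => hLp k) fun i _ j _ hij => hindep.indepFun hij]
    simp only [(hident _).variance_eq, Finset.sum_const, Finset.card_range, nsmul_eq_mul]
  rw [variance_eq_integral (memLp_finsetSum' _ fun k _ => hLp k).aemeasurable, hmean] at hvar
  simp only [Finset.sum_apply] at hvar
  simp only [mul_pow, integral_const_mul, hvar, inv_pow, Real.sq_sqrt n.cast_nonneg, ← mul_assoc]
  exact mul_le_of_le_one_left (variance_nonneg _ _) inv_mul_le_one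

theorem tendsto_integral_abs_inv_sqrt_mul_sum_sub (hX : MemLp (X 0) 2 P) (hindep : iIndepFun X P)
    (hident : ∀ i, IdentDistrib (X i) (X 0) P P) :
    Tendsto (fun n : ℕ => ∫ ω, |(√n)⁻¹ * (∑ k ∈ Finset.range n, X k ω - n * P[X 0])| ∂P) atTop
      (𝓝 √(2 * Var[X 0; P] / π)) := by
  have hclt := tendstoInDistribution_inv_sqrt_mul_sum_sub HasLaw.id hX hindep hident
  have hlim := tendsto_integral_norm_of_tendstoInDistribution hclt
    (memLp_inv_sqrt_mul_sum_sub hX hident) (memLp_id_gaussianReal 2)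
    (by simpa only [Real.norm_eq_abs, sq_abs] using
      integral_sq_inv_sqrt_mul_sum_sub_le hX hindep hident)
  simpa only [Real.norm_eq_abs, id_eq, integral_abs_gaussianReal,
    Real.coe_toNNReal _ (variance_nonneg _ _)] using hlim

end CentralLimitTheorem

lemma measurePreserving_infinitePi_pi_of_injective {ι κ : Type*} [Fintype ι] {α : κ → Type*}
    {mα : ∀ k, MeasurableSpace (α k)} (μ : ∀ k, Measure (α k)) [∀ k, IsProbabilityMeasure (μ k)]
    {g : ι → κ} (hg : g.Injective) :
    MeasurePreserving (fun ω i => ω (g i)) (Measure.infinitePi μ)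
      (Measure.pi fun i => μ (g i)) where
  measurable := by fun_prop
  map_eq := by rw [Measure.map_infinitePi_infinitePi_of_inj hg, Measure.infinitePi_eq_pi]

theorem tendsto_integral_pi_abs_sum_div_sqrt {α : Type*} {mα : MeasurableSpace α} {μ : Measure α}
    [IsProbabilityMeasure μ] {f : α → ℝ} (hf : Measurable f) (hf2 : MemLp f 2 μ)
    (hmean : ∫ x, f x ∂μ = 0) :
    Tendsto (fun n : ℕ => ∫ x : Fin n → α, |∑ i, f (x i)| / √n ∂Measure.pi fun _ => μ) atTop
      (𝓝 √(2 * Var[f; μ] / π)) := by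
  let P : Measure (ℕ → α) := Measure.infinitePi fun _ => μ
  have hlaw (k : ℕ) : MeasurePreserving (Function.eval k) P μ :=
    measurePreserving_eval_infinitePi (fun _ => μ) k
  have hident (k : ℕ) : IdentDistrib (fun ω => f (ω k)) f P μ :=
    (hlaw k).hasLaw.identDistrib HasLaw.id |>.comp hf
  have hclt := tendsto_integral_abs_inv_sqrt_mul_sum_sub (X := fun k (ω : ℕ → α) => f (ω k))
    (hf2.comp_measurePreserving (hlaw 0)) (iIndepFun_infinitePi fun _ => hf)
    fun k => (hident k).trans (hident 0).symm
  rw [(hident 0).variance_eq] at hclt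
  refine hclt.congr fun n => ?_
  rw [(hident 0).integral_eq, hmean]
  have hcoord := measurePreserving_infinitePi_pi_of_injective (fun _ : ℕ => μ)
    (Fin.val_injective (n := n))
  have hmeas : Measurable fun x : Fin n → α => |∑ i, f (x i)| / √n := by fun_prop
  rw [← hcoord.hasLaw.integral_comp hmeas.aestronglyMeasurable]
  refine integral_congr_ae (ae_of_all _ fun ω => ?_)
  simp only [Function.comp_apply, mul_zero, sub_zero, inv_mul_eq_div, abs_div,
    Fin.sum_univ_eq_sum_range (fun k => f (ω k)), abs_of_nonneg (Real.sqrt_nonneg n)]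

end FirstAbsoluteMoments

section Circle

instance : IsProbabilityMeasure circleHaar where
  measure_univ := by
    rw [circleHaar, Measure.smul_apply, Measure.map_apply (by fun_prop) .univ, Set.preimage_univ,
      Measure.restrict_apply_univ, Real.volume_Ioc, sub_zero, smul_eq_mul]
    exact ENNReal.inv_mul_cancel (by simp [Real.pi_pos]) ENNReal.ofReal_ne_top

lemma integral_circleHaar {E : Type*} [NormedAddCommGroup E] [NormedSpace ℝ E] {f : Circle → E}
    (hf : StronglyMeasurable f) :
    ∫ z, f z ∂circleHaar = (2 * π)⁻¹ • ∫ t in 0..2 * π, f (Circle.exp t) := by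
  rw [circleHaar, integral_smul_measure, integral_map (by fun_prop) hf.aestronglyMeasurable,
    intervalIntegral.integral_of_le Real.two_pi_pos.le, ENNReal.toReal_inv,
    ENNReal.toReal_ofReal Real.two_pi_pos.le]

lemma intervalIntegral_circleExp_add {E : Type*} [NormedAddCommGroup E] [NormedSpace ℝ E]
    (f : Circle → E) (a : ℝ) :
    ∫ t in 0..2 * π, f (Circle.exp (a + t)) = ∫ t in 0..2 * π, f (Circle.exp t) := by
  have hper : Function.Periodic (fun t => f (Circle.exp t)) (2 * π) :=
    Circle.periodic_exp.comp f
  simpa only [intervalIntegral.integral_comp_add_left (fun t => f (Circle.exp t)), add_zero,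
    zero_add] using hper.intervalIntegral_add_eq a 0

instance : circleHaar.IsMulLeftInvariant where
  map_mul_left_eq_self c := by
    have : IsProbabilityMeasure (circleHaar.map (c * ·)) :=
      Measure.isProbabilityMeasure_map (by fun_prop)
    refine ext_of_forall_integral_eq_of_IsFiniteMeasure fun f => ?_
    have hrot : Continuous fun z => f (c * z) := by fun_prop
    rw [integral_map (by fun_prop) f.continuous.aestronglyMeasurable,
      integral_circleHaar hrot.stronglyMeasurable,
      integral_circleHaar f.continuous.stronglyMeasurable]
    obtain ⟨a, rfl⟩ : ∃ a, Circle.exp a = c := ⟨_, Circle.exp_arg c⟩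
    simp only [← Circle.exp_add, intervalIntegral_circleExp_add]

lemma integral_abs_cos_zero_two_pi : ∫ t in 0..2 * π, |Real.cos t| = 4 := by
  have hper : Function.Periodic (fun t => |Real.cos t|) π := fun t => by
    simp only [Real.cos_add_pi, abs_neg]
  have hhalf : ∫ t in -(π / 2)..π / 2, |Real.cos t| = 2 := by
    rw [intervalIntegral.integral_congr (g := Real.cos), integral_cos, Real.sin_neg,
      Real.sin_pi_div_two]
    · norm_num
    · intro t ht
      rw [Set.uIcc_of_le (by linarith [Real.pi_pos])] at ht
      exact abs_of_nonneg (Real.cos_nonneg_of_mem_Icc ht)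
  calc ∫ t in 0..2 * π, |Real.cos t|
      = (2 : ℤ) • ∫ t in 0..0 + π, |Real.cos t| := by
        rw [← hper.intervalIntegral_add_zsmul_eq 2 0 fun a b =>
          Continuous.intervalIntegrable (by fun_prop) a b]
        norm_num
    _ = (2 : ℤ) • ∫ t in -(π / 2)..π / 2, |Real.cos t| := by
        rw [hper.intervalIntegral_add_eq 0 (-(π / 2)), neg_add_eq_sub, sub_half]
    _ = 4 := by rw [hhalf]; norm_num

lemma integral_circleHaar_abs_re : ∫ c : Circle, |(c : ℂ).re| ∂circleHaar = 2 / π := by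
  rw [integral_circleHaar (by fun_prop)]
  simp only [Circle.coe_exp, Complex.exp_ofReal_mul_I_re, integral_abs_cos_zero_two_pi, smul_eq_mul]
  field_simp
  norm_num

lemma integral_circleHaar_re : ∫ c : Circle, (c : ℂ).re ∂circleHaar = 0 := by
  rw [integral_circleHaar (by fun_prop)]
  simp [Complex.exp_ofReal_mul_I_re]

lemma integral_circleHaar_re_sq : ∫ c : Circle, (c : ℂ).re ^ 2 ∂circleHaar = 1 / 2 := by
  rw [integral_circleHaar (by fun_prop)]
  simp only [Circle.coe_exp, Complex.exp_ofReal_mul_I_re, integral_cos_sq, Real.cos_two_pi,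
    Real.sin_two_pi, Real.sin_zero, mul_zero, sub_zero, zero_add, smul_eq_mul]
  field_simp

lemma variance_re_circleHaar : Var[fun c : Circle => (c : ℂ).re; circleHaar] = 1 / 2 := by
  rw [variance_of_integral_eq_zero (by fun_prop) integral_circleHaar_re, integral_circleHaar_re_sq]

lemma memLp_re_circleHaar (p : ENNReal) : MemLp (fun c : Circle => (c : ℂ).re) p circleHaar :=
  .of_bound (Continuous.aestronglyMeasurable (by fun_prop)) 1 <| ae_of_all _ fun c =>
    (Complex.abs_re_le_norm c).trans_eq (Circle.norm_coe c)

lemma integral_circleHaar_abs_re_mul (w : ℂ) :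
    ∫ c : Circle, |((c : ℂ) * w).re| ∂circleHaar = 2 / π * ‖w‖ := by
  have hpolar (c : Circle) :
      |((c : ℂ) * w).re| = |((c * Circle.exp w.arg : Circle) : ℂ).re| * ‖w‖ := by
    nth_rw 1 [← Complex.norm_mul_exp_arg_mul_I w]
    rw [mul_left_comm, Complex.re_ofReal_mul, abs_mul, abs_norm, mul_comm, Circle.coe_mul,
      Circle.coe_exp]
  simp only [hpolar, integral_mul_const,
    integral_mul_right_eq_self (fun c : Circle => |(c : ℂ).re|), integral_circleHaar_abs_re]

theorem integral_norm_eq_integral_abs_re {Ω : Type*} {mΩ : MeasurableSpace Ω} {P : Measure Ω}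
    [SFinite P] {Z : Ω → ℂ} (hZ : Integrable Z P)
    (hrot : ∀ c : Circle, IdentDistrib (fun ω => c * Z ω) Z P P) :
    ∫ ω, ‖Z ω‖ ∂P = π / 2 * ∫ ω, |(Z ω).re| ∂P := by
  have hint : Integrable (Function.uncurry fun (c : Circle) ω => |((c : ℂ) * Z ω).re|)
      (circleHaar.prod P) := by
    refine (hZ.norm.comp_snd circleHaar).mono ?_ (ae_of_all _ fun ⟨c, ω⟩ => ?_)
    · have hZ' := hZ.aestronglyMeasurable.comp_snd (μ := circleHaar)
      have hre : Continuous fun w : ℂ => |w.re| := by fun_prop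
      exact hre.comp_aestronglyMeasurable (.mul (by fun_prop) hZ')
    · simpa only [Function.uncurry, Real.norm_eq_abs, abs_abs, abs_norm, norm_mul, Circle.norm_coe,
        one_mul] using Complex.abs_re_le_norm (c * Z ω)
  have habs (c : Circle) : ∫ ω, |((c : ℂ) * Z ω).re| ∂P = ∫ ω, |(Z ω).re| ∂P :=
    ((hrot c).comp (u := fun z : ℂ => |z.re|) (by fun_prop)).integral_eq
  have hswap := integral_integral_swap hint
  simp only [habs, integral_circleHaar_abs_re_mul, integral_const, probReal_univ, one_smul,
    integral_const_mul] at hswap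
  rw [hswap]
  field_simp

end Circle

section Torus

instance (d : ℕ) : IsProbabilityMeasure (torusHaar d) := by
  unfold torusHaar; infer_instance

instance (d : ℕ) : (torusHaar d).IsMulLeftInvariant := by
  unfold torusHaar; infer_instance

lemma identDistrib_mul_sum_torusHaar (d : ℕ) (c : Circle) :
    IdentDistrib (fun z : Fin d → Circle => (c : ℂ) * ∑ j, (z j : ℂ)) (fun z => ∑ j, (z j : ℂ))
      (torusHaar d) (torusHaar d) := by
  have hrot := (measurePreserving_mul_left (torusHaar d) fun _ => c).hasLaw.identDistrib HasLaw.id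
  convert! hrot.comp (u := fun z : Fin d → Circle => ∑ j, (z j : ℂ)) (by fun_prop) using 2 with z
  simp [Finset.mul_sum]

lemma integrable_sum_torusHaar (d : ℕ) :
    Integrable (fun z : Fin d → Circle => ∑ j, (z j : ℂ)) (torusHaar d) :=
  integrable_finsetSum _ fun j _ => .of_bound (Continuous.aestronglyMeasurable (by fun_prop)) 1 <|
    ae_of_all _ fun z => (Circle.norm_coe (z j)).le

theorem tendsto_integral_torusHaar_norm_sum_div_sqrt :
    Tendsto (fun d : ℕ => ∫ z : Fin d → Circle, ‖∑ j, (z j : ℂ)‖ / √d ∂torusHaar d) atTop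
      (𝓝 (√π / 2)) := by
  have hre := (tendsto_integral_pi_abs_sum_div_sqrt (by fun_prop) (memLp_re_circleHaar 2)
    integral_circleHaar_re).const_mul (π / 2)
  rw [variance_re_circleHaar] at hre
  convert! hre using 2 with d
  · rw [integral_div, integral_div, integral_norm_eq_integral_abs_re (integrable_sum_torusHaar d)
      (identDistrib_mul_sum_torusHaar d), mul_div_assoc]
    simp only [Complex.re_sum, torusHaar]
  · rw [show 2 * (1 / 2 : ℝ) / π = π⁻¹ by ring, Real.sqrt_inv]
    have := Real.sqrt_pos.2 Real.pi_pos
    field_simp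
    rw [Real.sq_sqrt Real.pi_pos.le]

end Torus

section Amplification

lemma two_rpow_one_div_mul_sqrt_pi_div_two_lt_one {p : ℝ}
    (hp : (1 - Real.log π / Real.log 4)⁻¹ < p) : (2 : ℝ) ^ (1 / p) * (√π / 2) < 1 := by
  have hlog2 : 0 < Real.log 2 := Real.log_pos one_lt_two
  have hlog4 : Real.log 4 = 2 * Real.log 2 := by
    rw [show (4 : ℝ) = 2 ^ 2 by norm_num, Real.log_pow, Nat.cast_ofNat]
  have hlogpi : Real.log π < Real.log 4 := Real.log_lt_log Real.pi_pos Real.pi_lt_four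
  have hpos : 0 < 1 - Real.log π / Real.log 4 :=
    sub_pos.2 <| (div_lt_one (by linarith)).2 hlogpi
  have hinv : 1 / p < 1 - Real.log π / Real.log 4 := by
    rw [one_div]; exact inv_lt_of_inv_lt₀ hpos hp
  have hlog : 1 / p * Real.log 2 < Real.log 2 - Real.log π / 2 := by
    calc 1 / p * Real.log 2 < (1 - Real.log π / Real.log 4) * Real.log 2 := by gcongr
      _ = Real.log 2 - Real.log π / 2 := by rw [hlog4]; field_simp
  rw [← Real.log_neg_iff (by positivity), Real.log_mul (by positivity) (by positivity),
    Real.log_rpow two_pos, Real.log_div (by positivity) two_ne_zero, Real.log_sqrt Real.pi_pos.le]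
  linarith

lemma exists_pos_mul_rpow_div_mul_pow_lt_one (C : ℝ) {b p r : ℝ} (hb : 0 ≤ b) (hr : 0 ≤ r)
    (hbr : b ^ (1 / p) * r < 1) : ∃ m : ℕ, 0 < m ∧ C * b ^ ((m : ℝ) / p) * r ^ m < 1 := by
  have hdecay := (tendsto_pow_atTop_nhds_zero_of_lt_one (by positivity) hbr).const_mul C
  rw [mul_zero] at hdecay
  obtain ⟨m, hm, hm0⟩ := ((hdecay.eventually_lt_const one_pos).and (eventually_gt_atTop 0)).exists
  refine ⟨m, hm0, ?_⟩
  rwa [div_eq_inv_mul, Real.rpow_mul_natCast hb, mul_assoc, ← mul_pow, ← one_div]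

end Amplification

/-- Amplification step: if `p > p₀ = (1 - log π / log 4)⁻¹` and `C > 0`, there are
`d, m ≥ 1` with `C · 2^{m/p} · (∫_{𝕋^d} |z₁ + ⋯ + z_d|/√d dμ)^m < 1`. -/
theorem exists_dim_pow_amplification (p : ℝ)
    (hp : (1 - Real.log Real.pi / Real.log 4)⁻¹ < p) (C : ℝ) (hC : 0 < C) :
    ∃ d m : ℕ, 0 < d ∧ 0 < m ∧
      C * (2 : ℝ) ^ ((m : ℝ) / p) *
        (∫ z : Fin d → Circle, ‖∑ j, (z j : ℂ)‖ / Real.sqrt d ∂(torusHaar d)) ^ m < 1 := by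
  obtain ⟨d, hlt, hd⟩ := ((tendsto_integral_torusHaar_norm_sum_div_sqrt.const_mul
    ((2 : ℝ) ^ (1 / p))).eventually_lt_const (two_rpow_one_div_mul_sqrt_pi_div_two_lt_one hp)
    |>.and (eventually_gt_atTop 0)).exists
  obtain ⟨m, hm, hlt_one⟩ := exists_pos_mul_rpow_div_mul_pow_lt_one C zero_le_two
    (integral_nonneg fun z => by positivity) hlt
  exact ⟨d, m, hd, hm, hlt_one⟩
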